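/- arXiv:1709.04642 — 2 statements merged into one kernel-verified Lean document; each statement's English description precedes it below -/
import Mathlib

section
/- Let Σ be a planar rotation system of a finite simple graph G and let e be an edge of G. Then the rotation system induced by Σ on G − e is a planar rotation system of G − e. -/
open SimpleGraph

/-- A rotation system of a simple graph: a permutation of the darts mapping each dart to a
dart with the same initial vertex, such that for every vertex the darts with that initial
vertex form a single orbit (or there are none). -/
structure RotationSystem {V : Type*} (G : SimpleGraph V) where
  toPerm : Equiv.Perm G.Dart
  fst_eq : ∀ d : G.Dart, (toPerm d).toProd.1 = d.toProd.1
  single_orbit : ∀ d d' : G.Dart, d.toProd.1 = d'.toProd.1 → ∃ n : ℕ, (toPerm ^ n) d = d'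

/-- The face permutation `d ↦ σ (reversal of d)` of a rotation system. -/
def RotationSystem.facePerm {V : Type*} {G : SimpleGraph V} (ρ : RotationSystem G) :
    Equiv.Perm G.Dart :=
  (Function.Involutive.toPerm SimpleGraph.Dart.symm (fun d => d.symm_symm)).trans ρ.toPerm

/-- Two darts lie on the same face iff they are in the same cycle of the face permutation. -/
def RotationSystem.faceSetoid {V : Type*} {G : SimpleGraph V} (ρ : RotationSystem G) :
    Setoid G.Dart where
  r := ρ.facePerm.SameCycle
  iseqv := ⟨fun x => Equiv.Perm.SameCycle.refl _ x, fun h => h.symm, fun h h' => h.trans h'⟩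

/-- A rotation system is planar if for every connected component containing at least one
edge, its numbers of vertices `V`, edges `E` and faces `F` satisfy `V - E + F = 2`; this is
stated as `2*V + 2*F = D + 4` where `D`, the number of darts in the component, equals `2*E`. -/
def RotationSystem.IsPlanar {V : Type*} {G : SimpleGraph V} (ρ : RotationSystem G) : Prop :=
  ∀ c : G.ConnectedComponent, (∃ d : G.Dart, G.connectedComponentMk d.toProd.1 = c) →
    2 * Nat.card {x : V // G.connectedComponentMk x = c} +
      2 * Nat.card {q : Quotient ρ.faceSetoid // G.connectedComponentMk q.out.toProd.1 = c} =
      Nat.card {d : G.Dart // G.connectedComponentMk d.toProd.1 = c} + 4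

/-- A dart of `G − e` (more generally, of `G` minus a set of edges) is a dart of `G`. -/
def liftDart {V : Type*} {G : SimpleGraph V} {s : Set (Sym2 V)}
    (d : (G.deleteEdges s).Dart) : G.Dart :=
  ⟨d.toProd, (SimpleGraph.deleteEdges_adj.mp d.adj).1⟩

/-!
Planarity is a homological condition that visibly survives the deletion of edges. A circulation is
an antisymmetric function on darts obeying Kirchhoff's law at every vertex. Counting dimensions,
in a connected map the circulations form a space of dimension `E - V + 1`, which contains the
`(F - 1)`-dimensional space of face boundaries `d ↦ g (face of d) - g (face of d reversed)`. Hence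
`V - E + F = 2` holds if and only if every circulation is a face boundary.

Now delete edges from a planar map. A circulation of what remains, extended by zero, is a
circulation of the original map, hence the boundary of some face potential `g`. As it vanishes on
the deleted edges, `g` agrees on the two sides of each of them, so it is constant on the merged
faces and exhibits the given circulation as a face boundary of the smaller map.
-/

theorem apply_eq_of_sameCycle {α β : Type*} {σ : Equiv.Perm α} {u : α → β}
    (hu : ∀ x, u (σ x) = u x) {x y : α} (h : σ.SameCycle x y) : u x = u y := by
  obtain ⟨n, rfl⟩ := h
  induction n with
  | zero => rfl
  | succ n ih => rw [add_comm, zpow_one_add, Equiv.Perm.mul_apply, hu, ih]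
  | pred n ih => rw [ih, ← hu ((σ ^ (-(n : ℤ) - 1)) x), ← Equiv.Perm.mul_apply, ← zpow_one_add,
      add_sub_cancel]

section Involution

variable {D X : Type*} {τ : Equiv.Perm D}

/-- The functions on `D` that change sign under the permutation `τ`. When `τ` reverses darts these
are the 1-chains of the underlying graph. -/
def antisymmetric (τ : Equiv.Perm D) : Submodule ℝ (EuclideanSpace ℝ D) where
  carrier := {h | ∀ d, h (τ d) = -h d}
  add_mem' {h k} hh hk d := by simp only [PiLp.add_apply, hh d, hk d, neg_add]
  zero_mem' d := by simp only [PiLp.zero_apply, neg_zero]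
  smul_mem' c h hh d := by simp only [PiLp.smul_apply, hh d, smul_neg]

theorem mem_antisymmetric {h : EuclideanSpace ℝ D} :
    h ∈ antisymmetric τ ↔ ∀ d, h (τ d) = -h d := Iff.rfl

/-- The difference of a potential on `X` across each dart: with `p d` the vertex at which `d`
starts (resp. the face of `d`), this is the coboundary of a potential on vertices (resp. the
boundary of a 2-chain). -/
noncomputable def difference (τ : Equiv.Perm D) (p : D → X) :
    (X → ℝ) →ₗ[ℝ] EuclideanSpace ℝ D :=
  (WithLp.linearEquiv 2 ℝ (D → ℝ)).symm.toLinearMap ∘ₗ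
    (LinearMap.funLeft ℝ ℝ p - LinearMap.funLeft ℝ ℝ (p ∘ τ))

@[simp]
theorem difference_apply (p : D → X) (f : X → ℝ) (d : D) :
    difference τ p f d = f (p d) - f (p (τ d)) := rfl

theorem range_difference_le_antisymmetric (hτ : Function.Involutive τ) (p : D → X) :
    LinearMap.range (difference τ p) ≤ antisymmetric τ := by
  rintro _ ⟨f, rfl⟩ d
  simp only [difference_apply, hτ d, neg_sub]

theorem two_mul_finrank_antisymmetric [Fintype D] (hτ : Function.Involutive τ)
    (hne : ∀ d, τ d ≠ d) :
    2 * Module.finrank ℝ (antisymmetric τ) = Fintype.card D := by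
  classical
  -- The projection `h ↦ (h - h ∘ τ) / 2` has trace `|D| / 2` because `τ` has no fixed points.
  let π : EuclideanSpace ℝ D →ₗ[ℝ] EuclideanSpace ℝ D :=
    (2⁻¹ : ℝ) • difference τ id ∘ₗ (WithLp.linearEquiv 2 ℝ (D → ℝ)).toLinearMap
  have π_apply (h : EuclideanSpace ℝ D) (d : D) : π h d = 2⁻¹ * (h d - h (τ d)) := rfl
  have isProj : LinearMap.IsProj (antisymmetric τ) π :=
    { map_mem := fun h d => by rw [π_apply, π_apply, hτ d]; ring
      map_id := fun h hh => by ext d; rw [π_apply, hh d]; ring }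
  have trace_eq : LinearMap.trace ℝ _ π = Fintype.card D * 2⁻¹ := by
    simp [LinearMap.trace_eq_sum_inner π (EuclideanSpace.basisFun D ℝ),
      EuclideanSpace.inner_single_left, π_apply, hne]
  have finrank_eq := isProj.trace.symm.trans trace_eq
  exact_mod_cast (by rw [finrank_eq]; ring :
    2 * (Module.finrank ℝ (antisymmetric τ) : ℝ) = Fintype.card D)

/-- The graph on `X` with an edge joining `p d` to `p (τ d)` for each `d` is connected (or `X` is
empty), expressed by its locally constant real functions. -/
def ConnectsAlong (τ : Equiv.Perm D) (p : D → X) : Prop :=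
  ∀ f : X → ℝ, (∀ d, f (p d) = f (p (τ d))) → ∀ x y, f x = f y

theorem ConnectsAlong.finrank_range_difference_add_one [Finite X] [Nonempty X] {p : D → X}
    (hp : ConnectsAlong τ p) :
    Module.finrank ℝ (LinearMap.range (difference τ p)) + 1 = Nat.card X := by
  have := Fintype.ofFinite X
  have ker_eq : LinearMap.ker (difference τ p) = Submodule.span ℝ {(1 : X → ℝ)} := by
    ext f
    rw [LinearMap.mem_ker, Submodule.mem_span_singleton]
    constructor
    · intro hf
      refine ⟨f (Classical.arbitrary X), funext fun x => ?_⟩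
      have hf' (d : D) : f (p d) = f (p (τ d)) := sub_eq_zero.1 (congr($hf d))
      simp [hp f hf' x (Classical.arbitrary X)]
    · rintro ⟨a, rfl⟩
      ext d
      simp
  have := (difference τ p).finrank_range_add_finrank_ker
  rwa [ker_eq, finrank_span_singleton one_ne_zero, Module.finrank_fintype_fun_eq_card,
    ← Nat.card_eq_fintype_card] at this

end Involution

/-- A combinatorial map with darts `D`: a vertex is a cycle of the rotation `rot`, an edge is a
cycle of the fixed-point free involution `rev`, and a face is a cycle of `rot * rev`. Vertices and
faces are labelled by `P` and `Q`; elements of `P` that are no `src` are isolated vertices. -/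
structure CombinatorialMap (P D Q : Type*) where
  rot : Equiv.Perm D
  rev : Equiv.Perm D
  rev_involutive : Function.Involutive rev
  rev_ne : ∀ d, rev d ≠ d
  src : D → P
  src_eq_iff : ∀ {d d'}, src d = src d' ↔ rot.SameCycle d d'
  face : D → Q
  face_eq_iff : ∀ {d d'}, face d = face d' ↔ (rot * rev).SameCycle d d'
  face_surjective : Function.Surjective face

namespace CombinatorialMap

variable {P D Q P' D' Q' C : Type*} (M : CombinatorialMap P D Q) {M' : CombinatorialMap P' D' Q'}

theorem src_rot (d : D) : M.src (M.rot d) = M.src d :=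
  M.src_eq_iff.2 (Equiv.Perm.sameCycle_apply_left.2 .rfl)

theorem face_rot_rev (d : D) : M.face (M.rot (M.rev d)) = M.face d :=
  M.face_eq_iff.2 (Equiv.Perm.sameCycle_apply_left.2 .rfl : (M.rot * M.rev).SameCycle _ d)

theorem exists_comp_src_eq {β : Type*} [Nonempty β] {u : D → β}
    (hu : ∀ d, u (M.rot d) = u d) : ∃ f : P → β, u = f ∘ M.src :=
  (Function.factorsThrough_iff u).1 fun _ _ h => apply_eq_of_sameCycle hu (M.src_eq_iff.1 h)

theorem exists_comp_face_eq {β : Type*} [Nonempty β] {u : D → β}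
    (hu : ∀ d, u (M.rot (M.rev d)) = u d) : ∃ g : Q → β, u = g ∘ M.face :=
  (Function.factorsThrough_iff u).1 fun _ _ h => apply_eq_of_sameCycle hu (M.face_eq_iff.1 h)

theorem connectsAlong_face (hM : ConnectsAlong M.rev M.src) : ConnectsAlong M.rev M.face := by
  intro g hg
  have hrot (d : D) : g (M.face (M.rot d)) = g (M.face d) := by
    rw [hg d, ← M.face_rot_rev (M.rev d), M.rev_involutive d]
  obtain ⟨f, hf⟩ := M.exists_comp_src_eq (u := g ∘ M.face) hrot
  have hf' (d : D) : f (M.src d) = g (M.face d) := congr_fun hf.symm d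
  have hconst := hM f fun d => by rw [hf', hf', hg]
  refine M.face_surjective.forall₂.2 fun d d' => ?_
  rw [← hf', ← hf', hconst]

section Homology

variable [Fintype D] [Fintype D']

/-- A 1-cycle: an antisymmetric function on darts satisfying Kirchhoff's law. The law at all
vertices together is expressed by testing against the functions on vertices. -/
structure IsCirculation (h : D → ℝ) : Prop where
  rev : ∀ d, h (M.rev d) = -h d
  kirchhoff : ∀ f : P → ℝ, ∑ d, h d * f (M.src d) = 0

/-- The first homology of the map vanishes: every circulation is the boundary of a function on
faces. -/
def HasTrivialHomology : Prop :=
  ∀ h, M.IsCirculation h → ∃ g : Q → ℝ, ∀ d, h d = g (M.face d) - g (M.face (M.rev d))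

variable {M}

theorem isCirculation_difference_face (g : Q → ℝ) :
    M.IsCirculation (difference M.rev M.face g) where
  rev := range_difference_le_antisymmetric M.rev_involutive M.face ⟨g, rfl⟩
  kirchhoff f := by
    have sum_eq : ∑ d, g (M.face (M.rev d)) * f (M.src d) = ∑ d, g (M.face d) * f (M.src d) :=
      calc
        _ = ∑ d, g (M.face d) * f (M.src (M.rev d)) := by
          rw [← Equiv.sum_comp M.rev]
          simp only [M.rev_involutive _]
        _ = ∑ d, g (M.face (M.rot (M.rev d))) * f (M.src (M.rot (M.rev d))) := by
          simp only [M.face_rot_rev, M.src_rot]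
        _ = _ := Equiv.sum_comp (M.rev.trans M.rot) fun d => g (M.face d) * f (M.src d)
    simp only [difference_apply, sub_mul, Finset.sum_sub_distrib, sum_eq, sub_self]

theorem inner_difference_src {h : EuclideanSpace ℝ D} (hh : h ∈ antisymmetric M.rev) (f : P → ℝ) :
    inner ℝ (difference M.rev M.src f) h = 2 * ∑ d, h d * f (M.src d) := by
  have sum_rev : ∑ d, h d * f (M.src (M.rev d)) = -∑ d, h d * f (M.src d) := by
    rw [← Equiv.sum_comp M.rev, ← Finset.sum_neg_distrib]
    simp only [M.rev_involutive _, mem_antisymmetric.1 hh, neg_mul]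
  calc
    _ = ∑ d, h d * f (M.src d) - ∑ d, h d * f (M.src (M.rev d)) := by
      simp [PiLp.inner_apply, mul_sub]
    _ = _ := by rw [sum_rev]; ring

theorem isCirculation_iff_mem {h : EuclideanSpace ℝ D} :
    M.IsCirculation h ↔
      h ∈ (LinearMap.range (difference M.rev M.src))ᗮ ⊓ antisymmetric M.rev := by
  rw [Submodule.mem_inf, and_comm, Submodule.mem_orthogonal]
  constructor
  · rintro ⟨hrev, hsum⟩
    refine ⟨hrev, ?_⟩
    rintro _ ⟨f, rfl⟩
    rw [inner_difference_src hrev, hsum, mul_zero]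
  · rintro ⟨hrev, horth⟩
    refine ⟨hrev, fun f => ?_⟩
    simpa [inner_difference_src hrev] using horth _ ⟨f, rfl⟩

theorem hasTrivialHomology_iff_le : M.HasTrivialHomology ↔
    (LinearMap.range (difference M.rev M.src))ᗮ ⊓ antisymmetric M.rev ≤
      LinearMap.range (difference M.rev M.face) := by
  constructor
  · intro hM h hh
    obtain ⟨g, hg⟩ := hM h (isCirculation_iff_mem.2 hh)
    exact ⟨g, PiLp.ext fun d => (hg d).symm⟩
  · intro hle h hh
    obtain ⟨g, hg⟩ := hle (x := WithLp.toLp 2 h) (isCirculation_iff_mem.1 hh)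
    exact ⟨g, fun d => congr($hg d).symm⟩

theorem euler_iff_hasTrivialHomology [Finite P] [Finite Q] [Nonempty D]
    (hM : ConnectsAlong M.rev M.src) :
    2 * Nat.card P + 2 * Nat.card Q = Nat.card D + 4 ↔ M.HasTrivialHomology := by
  have : Nonempty P := .map M.src inferInstance
  have : Nonempty Q := .map M.face inferInstance
  rw [hasTrivialHomology_iff_le, Nat.card_eq_fintype_card (α := D)]
  set circulations := (LinearMap.range (difference M.rev M.src))ᗮ ⊓ antisymmetric M.rev
  set boundaries := LinearMap.range (difference M.rev M.face)
  have boundaries_le : boundaries ≤ circulations := by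
    rintro _ ⟨g, rfl⟩
    exact isCirculation_iff_mem.1 (isCirculation_difference_face g)
  have finrank_chains := two_mul_finrank_antisymmetric M.rev_involutive M.rev_ne
  have finrank_coboundaries := hM.finrank_range_difference_add_one
  have finrank_boundaries : Module.finrank ℝ boundaries + 1 = Nat.card Q :=
    (M.connectsAlong_face hM).finrank_range_difference_add_one
  have finrank_circulations : _ + Module.finrank ℝ circulations = _ :=
    Submodule.finrank_add_inf_finrank_orthogonal
      (range_difference_le_antisymmetric M.rev_involutive M.src)
  constructor
  · intro euler
    exact (Submodule.eq_of_le_of_finrank_eq boundaries_le (by omega)).ge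
  · intro hle
    have := congr(Module.finrank ℝ $(le_antisymm boundaries_le hle))
    omega

end Homology

/-- `M'` is the map induced by `M` on a set of darts closed under reversal, embedded by `ι`: its
rotation sends each dart to the first one following it in `M` that lies in the set. -/
structure IsInduced (M' : CombinatorialMap P' D' Q') (M : CombinatorialMap P D Q) (ι : D' → D) :
    Prop where
  injective : Function.Injective ι
  map_rev : ∀ d, ι (M'.rev d) = M.rev (ι d)
  map_rot : ∀ d, ∃ n : ℕ, 0 < n ∧ (M.rot ^ n) (ι d) = ι (M'.rot d) ∧
    ∀ m : ℕ, 0 < m → m < n → (M.rot ^ m) (ι d) ∉ Set.range ι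

namespace IsInduced

variable {M} {ι : D' → D} (hι : M'.IsInduced M ι)

include hι

theorem rev_notMem_range {x : D} (hx : x ∉ Set.range ι) : M.rev x ∉ Set.range ι := by
  rintro ⟨d, hd⟩
  exact hx ⟨M'.rev d, by rw [hι.map_rev, hd, M.rev_involutive x]⟩

theorem src_rot (d : D') : M.src (ι (M'.rot d)) = M.src (ι d) := by
  obtain ⟨n, -, hn, -⟩ := hι.map_rot d
  exact M.src_eq_iff.2 (.symm ⟨n, by rw [zpow_natCast, hn]⟩)

theorem apply_face_rot_rev {β : Type*} {g : Q → β}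
    (hg : ∀ x ∉ Set.range ι, g (M.face x) = g (M.face (M.rev x))) (d : D') :
    g (M.face (ι (M'.rot (M'.rev d)))) = g (M.face (ι d)) := by
  have hrot (x : D) : g (M.face (M.rot x)) = g (M.face (M.rev x)) := by
    rw [← M.face_rot_rev (M.rev x), M.rev_involutive x]
  obtain ⟨n, hn, hend, hskip⟩ := hι.map_rot (M'.rev d)
  have along (m : ℕ) (hm : m < n) :
      g (M.face ((M.rot ^ (m + 1)) (ι (M'.rev d)))) = g (M.face (ι d)) := by
    induction m with
    | zero => rw [zero_add, pow_one, hrot, ← hι.map_rev, M'.rev_involutive d]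
    | succ m ih =>
      rw [pow_succ', Equiv.Perm.mul_apply, hrot, ← hg _ (hskip (m + 1) m.succ_pos hm),
        ih (by lia)]
  have := along (n - 1) (by lia)
  rwa [Nat.sub_add_cancel hn, hend] at this

variable [Fintype D] [Fintype D']

theorem isCirculation_extend {h : D' → ℝ} (hh : M'.IsCirculation h) :
    M.IsCirculation (Function.extend ι h 0) where
  rev x := by
    by_cases hx : x ∈ Set.range ι
    · obtain ⟨d, rfl⟩ := hx
      rw [← hι.map_rev, hι.injective.extend_apply, hι.injective.extend_apply, hh.rev]
    · rw [Function.extend_apply' _ _ _ hx, Function.extend_apply' _ _ _ (hι.rev_notMem_range hx),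
        Pi.zero_apply, Pi.zero_apply, neg_zero]
  kirchhoff f := by
    obtain ⟨f', hf'⟩ := M'.exists_comp_src_eq (u := fun d => f (M.src (ι d)))
      fun d => by rw [hι.src_rot]
    rw [← hh.kirchhoff f']
    refine (Fintype.sum_of_injective ι hι.injective _ _ (fun x hx => ?_) fun d => ?_).symm
    · rw [Function.extend_apply' _ _ _ hx, Pi.zero_apply, zero_mul]
    · rw [hι.injective.extend_apply, congr_fun hf' d, Function.comp_apply]

theorem hasTrivialHomology (hM : M.HasTrivialHomology) : M'.HasTrivialHomology := by
  intro h hh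
  obtain ⟨g, hg⟩ := hM _ (hι.isCirculation_extend hh)
  have hout (x : D) (hx : x ∉ Set.range ι) : g (M.face x) = g (M.face (M.rev x)) := by
    rw [← sub_eq_zero, ← hg, Function.extend_apply' _ _ _ hx, Pi.zero_apply]
  obtain ⟨g', hg'⟩ := M'.exists_comp_face_eq (u := fun d => g (M.face (ι d)))
    (hι.apply_face_rot_rev hout)
  have hg'_face (d : D') : g' (M'.face d) = g (M.face (ι d)) := congr_fun hg'.symm d
  refine ⟨g', fun d => ?_⟩
  rw [hg'_face, hg'_face, hι.map_rev, ← hg, hι.injective.extend_apply]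

end IsInduced

/-- A decomposition of a map into parts indexed by `C`, each a union of connected components,
given by the part containing each vertex and the part containing each face. -/
structure Splitting (C : Type*) where
  vertexPart : P → C
  facePart : Q → C
  vertexPart_rev : ∀ d, vertexPart (M.src (M.rev d)) = vertexPart (M.src d)
  facePart_face : ∀ d, facePart (M.face d) = vertexPart (M.src d)

namespace Splitting

variable {M} (S : M.Splitting C) (c : C)

/-- The part of a split combinatorial map indexed by `c`, on the subtypes of its vertices, darts and
faces. -/
def part : CombinatorialMap {x // S.vertexPart x = c} {d // S.vertexPart (M.src d) = c}
    {q // S.facePart q = c} where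
  rot := M.rot.subtypePerm fun d => by rw [M.src_rot]
  rev := M.rev.subtypePerm fun d => by rw [S.vertexPart_rev]
  rev_involutive d := Subtype.ext (M.rev_involutive d)
  rev_ne d h := M.rev_ne d (congrArg Subtype.val h)
  src d := ⟨M.src d, d.2⟩
  src_eq_iff {d d'} := by rw [Subtype.mk_eq_mk, M.src_eq_iff, Equiv.Perm.sameCycle_subtypePerm]
  face d := ⟨M.face d, (S.facePart_face d).trans d.2⟩
  face_eq_iff {d d'} := by
    rw [Subtype.mk_eq_mk, M.face_eq_iff, Equiv.Perm.subtypePerm_mul]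
    exact Equiv.Perm.sameCycle_subtypePerm.symm
  face_surjective := by
    rintro ⟨q, hq⟩
    obtain ⟨d, rfl⟩ := M.face_surjective q
    exact ⟨⟨d, (S.facePart_face d).symm.trans hq⟩, rfl⟩

theorem isInduced_part : (S.part c).IsInduced M Subtype.val where
  injective := Subtype.val_injective
  map_rev _ := rfl
  map_rot _ := ⟨1, one_pos, rfl, fun _ _ _ => by lia⟩

variable [Fintype D]

theorem isCirculation_part [Fintype {d // S.vertexPart (M.src d) = c}] {h : D → ℝ}
    (hh : M.IsCirculation h) : (S.part c).IsCirculation fun d => h d where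
  rev d := hh.rev d
  kirchhoff f := by
    rw [← hh.kirchhoff (Function.extend Subtype.val f 0)]
    refine Fintype.sum_of_injective Subtype.val Subtype.val_injective _ _ (fun d hd => ?_)
      fun d => ?_
    · rw [Function.extend_apply', Pi.zero_apply, mul_zero]
      rintro ⟨x, hx⟩
      exact hd ⟨⟨d, hx ▸ x.2⟩, rfl⟩
    · exact congrArg (h d * ·) (Subtype.val_injective.extend_apply f 0 ((S.part c).src d)).symm

theorem hasTrivialHomology_iff [∀ c, Fintype {d // S.vertexPart (M.src d) = c}] :
    M.HasTrivialHomology ↔ ∀ c, (S.part c).HasTrivialHomology := by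
  refine ⟨fun hM c => (S.isInduced_part c).hasTrivialHomology hM, fun hS h hh => ?_⟩
  choose g hg using fun c => hS c _ (S.isCirculation_part c hh)
  have hface (c : C) (d : D) (hd : S.facePart (M.face d) = c) :
      g (S.facePart (M.face d)) ⟨M.face d, rfl⟩ = g c ⟨M.face d, hd⟩ := by
    subst hd
    rfl
  refine ⟨fun q => g (S.facePart q) ⟨q, rfl⟩, fun d => ?_⟩
  beta_reduce
  rw [hface _ d (S.facePart_face d),
    hface _ (M.rev d) ((S.facePart_face _).trans (S.vertexPart_rev d))]
  exact hg _ ⟨d, rfl⟩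

end Splitting

end CombinatorialMap

namespace RotationSystem

variable {V : Type*} {G : SimpleGraph V} (ρ : RotationSystem G)

/-- The combinatorial map of a rotation system: its vertices are those of the graph, isolated ones
included, and its faces are the cycles of `RotationSystem.facePerm`. -/
def toCombinatorialMap : CombinatorialMap V G.Dart (Quotient ρ.faceSetoid) where
  rot := ρ.toPerm
  rev := Function.Involutive.toPerm Dart.symm Dart.symm_involutive
  rev_involutive := Dart.symm_involutive
  rev_ne := Dart.symm_ne
  src d := d.fst
  src_eq_iff {d d'} := by
    refine ⟨fun h => ?_, apply_eq_of_sameCycle (u := fun d : G.Dart => d.fst) ρ.fst_eq⟩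
    obtain ⟨n, hn⟩ := ρ.single_orbit d d' h
    exact ⟨n, hn⟩
  face := Quotient.mk ρ.faceSetoid
  face_eq_iff := Quotient.eq
  face_surjective := Quotient.mk_surjective

/-- The decomposition of a rotation system into the connected components of its graph. The
component of a face is read off the representative dart `Quotient.out`, as in
`RotationSystem.IsPlanar`. -/
noncomputable def componentSplitting : ρ.toCombinatorialMap.Splitting G.ConnectedComponent where
  vertexPart := G.connectedComponentMk
  facePart q := G.connectedComponentMk q.out.fst
  vertexPart_rev d := ConnectedComponent.sound d.adj.symm.reachable
  facePart_face d := by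
    refine apply_eq_of_sameCycle (u := fun x : G.Dart => G.connectedComponentMk x.fst)
      (fun x => ?_) (Quotient.mk_out (s := ρ.faceSetoid) d)
    exact (congrArg G.connectedComponentMk (ρ.fst_eq x.symm)).trans
      (ConnectedComponent.sound x.adj.symm.reachable)

theorem connectsAlong_part (c : G.ConnectedComponent) :
    ConnectsAlong (ρ.componentSplitting.part c).rev (ρ.componentSplitting.part c).src := by
  intro f hf
  have along_walk {x y : V} (w : G.Walk x y) (hx : G.connectedComponentMk x = c)
      (hy : G.connectedComponentMk y = c) : f ⟨x, hx⟩ = f ⟨y, hy⟩ := by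
    induction w with
    | nil => rfl
    | cons hadj _ ih =>
      exact (hf ⟨⟨(_, _), hadj⟩, hx⟩).trans
        (ih ((ConnectedComponent.sound hadj.symm.reachable).trans hx) hy)
  rintro ⟨x, hx⟩ ⟨y, hy⟩
  obtain ⟨w⟩ := ConnectedComponent.exact (hx.trans hy.symm)
  exact along_walk w hx hy

theorem isPlanar_iff_hasTrivialHomology [Finite V] [Fintype G.Dart] :
    ρ.IsPlanar ↔ ρ.toCombinatorialMap.HasTrivialHomology := by
  classical
  rw [ρ.componentSplitting.hasTrivialHomology_iff]
  refine forall_congr' fun c => ?_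
  have euler_iff (hc : ∃ d : G.Dart, G.connectedComponentMk d.fst = c) :=
    have : Nonempty {d : G.Dart //
        ρ.componentSplitting.vertexPart (ρ.toCombinatorialMap.src d) = c} := nonempty_subtype.2 hc
    CombinatorialMap.euler_iff_hasTrivialHomology (ρ.connectsAlong_part c)
  refine ⟨fun h => ?_, fun h hc => (euler_iff hc).2 h⟩
  by_cases hc : ∃ d : G.Dart, G.connectedComponentMk d.fst = c
  · exact (euler_iff hc).1 (h hc)
  · exact fun _ _ => ⟨0, fun d => absurd ⟨d.1, d.2⟩ hc⟩

end RotationSystem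

theorem liftDart_injective {V : Type*} {G : SimpleGraph V} {s : Set (Sym2 V)} :
    Function.Injective (liftDart : (G.deleteEdges s).Dart → G.Dart) :=
  fun d d' h => Dart.ext d d' (congrArg (fun x : G.Dart => x.toProd) h)

theorem edge_liftDart_notMem {V : Type*} {G : SimpleGraph V} {s : Set (Sym2 V)}
    (d : (G.deleteEdges s).Dart) : (liftDart d).edge ∉ s :=
  (deleteEdges_adj.1 d.adj).2

theorem induced_rotationSystem_deleteEdge_planar_general {V : Type*} [Finite V]
    {G : SimpleGraph V} {ρ : RotationSystem G} (hρ : ρ.IsPlanar) {s : Set (Sym2 V)}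
    {ρ' : RotationSystem (G.deleteEdges s)}
    (hind : ∀ d : (G.deleteEdges s).Dart, ∃ n : ℕ, 0 < n ∧
      (ρ.toPerm ^ n) (liftDart d) = liftDart (ρ'.toPerm d) ∧
      ∀ m : ℕ, 0 < m → m < n → ((ρ.toPerm ^ m) (liftDart d)).edge ∈ s) :
    ρ'.IsPlanar := by
  classical
  have := Fintype.ofFinite V
  have := Fintype.ofFinite G.Dart
  have := Fintype.ofFinite (G.deleteEdges s).Dart
  have isInduced : ρ'.toCombinatorialMap.IsInduced ρ.toCombinatorialMap liftDart :=
    { injective := liftDart_injective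
      map_rev := fun _ => rfl
      map_rot := fun d => by
        obtain ⟨n, hn, hend, hskip⟩ := hind d
        refine ⟨n, hn, hend, fun m hm hmn => ?_⟩
        rintro ⟨d', hd'⟩
        exact edge_liftDart_notMem d' (hd' ▸ hskip m hm hmn) }
  rw [RotationSystem.isPlanar_iff_hasTrivialHomology] at hρ ⊢
  exact isInduced.hasTrivialHomology hρ

/-- the rotation system induced on `G − e` by a planar rotation system `ρ`
of `G` (each remaining dart `d` is sent to the first dart among `ρ d, ρ² d, …` that is
not a dart of `e`) is planar. -/
theorem induced_rotationSystem_deleteEdge_planar {V : Type*} [Fintype V]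
    (G : SimpleGraph V) (ρ : RotationSystem G) (hρ : ρ.IsPlanar)
    (e : Sym2 V) (he : e ∈ G.edgeSet)
    (ρ' : RotationSystem (G.deleteEdges {e}))
    (hind : ∀ d : (G.deleteEdges {e}).Dart, ∃ n : ℕ, 0 < n ∧
      (ρ.toPerm ^ n) (liftDart d) = liftDart (ρ'.toPerm d) ∧
      ∀ m : ℕ, 0 < m → m < n → ((ρ.toPerm ^ m) (liftDart d)).edge = e) :
    ρ'.IsPlanar :=
  induced_rotationSystem_deleteEdge_planar_general hρ hind
end

section
/- Let G be a 3-connected finite simple graph that admits a planar rotation system, let v and w be two distinct vertices of G, let A be a set of three distinct edges incident with v and let B be a set of three distinct edges incident with w. Then exactly three of the six bijections f from A to B have the property that the marked graph (G, v, w, ((a, f(a)) for a ∈ A)) is planar. -/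
open SimpleGraph

/-- A finite simple graph is `k`-connected if it has at least `k+1` vertices and removing
any set of fewer than `k` vertices leaves a connected graph. -/
def IsKConnected (k : ℕ) {V : Type*} [Fintype V] (G : SimpleGraph V) : Prop :=
  k + 1 ≤ Fintype.card V ∧
    ∀ X : Finset V, X.card < k → (G.induce ((↑X : Set V)ᶜ)).Connected

/-- `y` is the first element of `S` among `σ x, σ² x, …`; for `x, y ∈ S` this says that
the restriction of (the cycle of) `σ` to `S` maps `x` to `y`. -/
def RestrictMapsTo {α : Type*} (σ : Equiv.Perm α) (S : Set α) (x y : α) : Prop :=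
  ∃ n : ℕ, 0 < n ∧ (σ ^ n) x = y ∧ ∀ m : ℕ, 0 < m → m < n → (σ ^ m) x ∉ S

/-- The marked graph `(G, v, w, ((a i, b i) : i = 1,2,3))` — with the edges at `v` and `w`
identified with the darts at `v` and `w` — is planar: `G` has a planar rotation system whose
rotator at `v` restricted to `{a 0, a 1, a 2}`, transported along `a i ↦ b i`, is the
inverse of its rotator at `w` restricted to `{b 0, b 1, b 2}`. -/
def MarkedPlanar {V : Type*} (G : SimpleGraph V) (a b : Fin 3 → G.Dart) : Prop :=
  ∃ ρ : RotationSystem G, ρ.IsPlanar ∧ ∀ i j : Fin 3,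
    RestrictMapsTo ρ.toPerm (Set.range a) (a i) (a j) →
      RestrictMapsTo ρ.toPerm (Set.range b) (b j) (b i)

/-!
Write `σ` for the rotation and `φ` for the face permutation of a planar rotation system. Euler's
formula says that `H¹` of the sphere vanishes, in the following form: a function `γ` on darts with
sum zero around every vertex and every face is a difference `T - T ∘ σ⁻¹` with `T` a function on
edges. Reading `γ` as the vertex passages of a closed curve, `T` is its winding number around the
edges. As deleting two vertices leaves `G` connected, curves through at most two vertices are
trivial: a face visits each vertex once, and two faces share at most a vertex or an edge. Hence
facial cycles do not separate `G`.

In a second planar rotation system `σ'` a facial cycle of `σ` still has two sides, and since the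
rest of `G` lies on one of them, every face of `σ` is a face of `σ'` or of its mirror image. This
choice propagates to neighbouring faces, so `σ'` is `σ` or `σ⁻¹` (Whitney).

Finally, `σ` induces 3-cycles `ε` and `δ` on the indices of the marked darts at `v` and `w`, and a
bijection `π` gives a planar marked graph iff `δ π ε = π`. Three permutations satisfy this.
-/

open Module

section Perm

variable {D β : Type*} {p : Equiv.Perm D} {f : D → β}

theorem apply_eq_of_sameCycle_s7 (hf : ∀ d, f (p d) = f d) {d d' : D} (h : p.SameCycle d d') :
    f d' = f d := by
  obtain ⟨n, rfl⟩ := h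
  have hf' : ∀ d, f (p⁻¹ d) = f d := fun d => by simpa using (hf (p⁻¹ d)).symm
  induction n using Int.induction_on with
  | zero => rfl
  | succ n ih => rw [add_comm, zpow_one_add, Equiv.Perm.mul_apply, hf, ih]
  | pred n ih =>
    rw [sub_eq_neg_add, zpow_add, zpow_neg_one, Equiv.Perm.mul_apply, hf', ih]

theorem of_sameCycle [Finite D] {P : D → Prop} {d d' : D} (h : p.SameCycle d d') (hd : P d)
    (step : ∀ x, p.SameCycle d x → P x → P (p x)) : P d' := by
  obtain ⟨n, rfl⟩ := h.exists_nat_pow_eq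
  clear h
  induction n with
  | zero => exact hd
  | succ n ih =>
    rw [pow_succ', Equiv.Perm.mul_apply]
    exact step _ (Equiv.Perm.sameCycle_pow_right.2 .rfl) ih

theorem apply_eq_of_forall_ne [Finite D] {d₀ : D}
    (hf : ∀ d, p.SameCycle d₀ d → d ≠ d₀ → f (p d) = f d) : f (p d₀) = f d₀ := by
  have h : p.SameCycle (p d₀) d₀ := Equiv.Perm.sameCycle_apply_left.2 .rfl
  refine (of_sameCycle (P := fun d => f d = f (p d₀)) h rfl fun d hd hfd => ?_).symm
  by_cases hdd : d = d₀
  · rw [hdd]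
  · rw [hf d (Equiv.Perm.sameCycle_apply_left.1 hd) hdd, hfd]

end Perm

section InvariantFunctions

variable (K : Type*) [Field K] {D : Type*}

/-- The coboundary `T - T ∘ p⁻¹` of a function `T` along a permutation `p`. -/
def coboundary (p : Equiv.Perm D) : (D → K) →ₗ[K] (D → K) :=
  LinearMap.id - LinearMap.funLeft K K ⇑p⁻¹

/-- The space of `p`-invariant functions; its dimension is the number of cycles of `p`. -/
def invariantFunctions (p : Equiv.Perm D) : Submodule K (D → K) :=
  LinearMap.ker (coboundary K p)

variable {K} {p q r : Equiv.Perm D} {T γ : D → K}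

theorem coboundary_apply (T : D → K) (d : D) : coboundary K p T d = T d - T (p⁻¹ d) := rfl

theorem mem_invariantFunctions : T ∈ invariantFunctions K p ↔ ∀ d, T (p d) = T d := by
  simp only [invariantFunctions, LinearMap.mem_ker, funext_iff, coboundary_apply, Pi.zero_apply,
    sub_eq_zero]
  exact ⟨fun h d => by simpa using h (p d), fun h d => by simpa using h (p⁻¹ d)⟩

theorem invariantFunctions_inv (p : Equiv.Perm D) :
    invariantFunctions K p⁻¹ = invariantFunctions K p := by
  ext T
  simp only [mem_invariantFunctions]
  exact ⟨fun h d => by simpa using (h (p d)).symm, fun h d => by simpa using (h (p⁻¹ d)).symm⟩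

theorem card_le_finrank_invariantFunctions [Finite D] {ι : Type*} {π : D → ι}
    (hsurj : Function.Surjective π) (hπ : ∀ d, π (p d) = π d) :
    Nat.card ι ≤ finrank K (invariantFunctions K p) := by
  have : Finite ι := Finite.of_surjective π hsurj
  have := Fintype.ofFinite ι
  let pullback : (ι → K) →ₗ[K] invariantFunctions K p :=
    (LinearMap.funLeft K K π).codRestrict _ fun c =>
      mem_invariantFunctions.2 fun d => congrArg c (hπ d)
  have hinj : Function.Injective pullback := fun c c' h =>
    LinearMap.funLeft_injective_of_surjective K K π hsurj (congrArg Subtype.val h)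
  simpa using LinearMap.finrank_le_finrank_of_injective hinj

theorem finrank_le_one_of_forall_const {W : Submodule K (D → K)}
    (hW : ∀ T ∈ W, ∀ d d', T d = T d') : finrank K W ≤ 1 := by
  have hle : W ≤ K ∙ (1 : D → K) := fun T hT => by
    rcases isEmpty_or_nonempty D with _ | ⟨⟨d⟩⟩
    · rw [Subsingleton.elim T 0]
      exact zero_mem _
    · exact Submodule.mem_span_singleton.2 ⟨T d, funext fun d' => by simp [hW T hT d d']⟩
  exact (Submodule.finrank_mono hle).trans ((finrank_span_le_card _).trans (by simp))

variable [Fintype D]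

theorem dotProduct_coboundary_eq_zero {g : D → K} (hg : g ∈ invariantFunctions K p) (T : D → K) :
    g ⬝ᵥ coboundary K p T = 0 := by
  have hg' : g ∘ ⇑p = g := funext (mem_invariantFunctions.1 hg)
  have hT : coboundary K p T = T - T ∘ p.symm := rfl
  rw [hT, dotProduct_sub, dotProduct_comp_equiv_symm, hg', sub_self]

/-- The orthogonal complement for the standard bilinear form `g ⬝ᵥ γ`. -/
def dotOrthogonal (W : Submodule K (D → K)) : Submodule K (D → K) :=
  LinearMap.BilinForm.orthogonal (dotProductBilin K K) W

theorem finrank_dotOrthogonal (W : Submodule K (D → K)) :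
    finrank K (dotOrthogonal W) = Fintype.card D - finrank K W := by
  have hB : (dotProductBilin K K : LinearMap.BilinForm K (D → K)).Nondegenerate :=
    ⟨fun x hx => dotProduct_eq_zero x hx,
      fun x hx => dotProduct_eq_zero x fun y => (dotProduct_comm x y).trans (hx y)⟩
  rw [dotOrthogonal, LinearMap.BilinForm.finrank_orthogonal hB, finrank_fintype_fun_eq_card]

theorem mem_dotOrthogonal_sup {W W' : Submodule K (D → K)} :
    γ ∈ dotOrthogonal (W ⊔ W') ↔ (∀ g ∈ W, g ⬝ᵥ γ = 0) ∧ ∀ g ∈ W', g ⬝ᵥ γ = 0 := by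
  refine ⟨fun h => ⟨fun g hg => h g (Submodule.mem_sup_left hg),
    fun g hg => h g (Submodule.mem_sup_right hg)⟩, fun ⟨h, h'⟩ x hx => ?_⟩
  obtain ⟨g, hg, g', hg', rfl⟩ := Submodule.mem_sup.1 hx
  change (g + g') ⬝ᵥ γ = 0
  rw [add_dotProduct, h g hg, h' g' hg', add_zero]

theorem map_coboundary_mul_le_dotOrthogonal (q r : Equiv.Perm D) :
    (invariantFunctions K r).map (coboundary K (q * r)) ≤
      dotOrthogonal (invariantFunctions K (q * r) ⊔ invariantFunctions K q) := by
  rintro _ ⟨T, hT, rfl⟩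
  have hTr : coboundary K (q * r) T = coboundary K q T := by
    rw [SetLike.mem_coe, ← invariantFunctions_inv, mem_invariantFunctions] at hT
    ext d
    rw [coboundary_apply, coboundary_apply, mul_inv_rev, Equiv.Perm.mul_apply, hT]
  exact mem_dotOrthogonal_sup.2 ⟨fun g hg => dotProduct_coboundary_eq_zero hg T,
    fun g hg => hTr ▸ dotProduct_coboundary_eq_zero hg T⟩

theorem finrank_map_add_finrank_inf_ker {M N : Type*} [AddCommGroup M] [Module K M]
    [FiniteDimensional K M] [AddCommGroup N] [Module K N] (f : M →ₗ[K] N) (W : Submodule K M) :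
    finrank K (W.map f) + finrank K ↥(W ⊓ LinearMap.ker f) = finrank K W := by
  have h := LinearMap.finrank_range_add_finrank_ker (f.domRestrict W)
  rwa [LinearMap.range_domRestrict, LinearMap.ker_domRestrict, ← Submodule.finrank_map_subtype_eq,
    Submodule.map_comap_subtype] at h

/-- The inequality says that the map with vertex, edge and face permutations `p`, `q`, `r` has
genus zero. In genus zero there is no further obstruction to solving the equation. -/
theorem exists_coboundary_eq (hp : p = q * r)
    (hconn : ∀ T : D → K, (∀ d, T (q d) = T d) → (∀ d, T (r d) = T d) → ∀ d d', T d = T d')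
    (hgenus : Nat.card D + 2 ≤ finrank K (invariantFunctions K p) +
      finrank K (invariantFunctions K q) + finrank K (invariantFunctions K r))
    (hγp : ∀ g ∈ invariantFunctions K p, g ⬝ᵥ γ = 0)
    (hγq : ∀ g ∈ invariantFunctions K q, g ⬝ᵥ γ = 0) :
    ∃ T ∈ invariantFunctions K r, coboundary K p T = γ := by
  subst hp
  set P := invariantFunctions K (q * r)
  set Q := invariantFunctions K q
  set R := invariantFunctions K r
  have hPQ : finrank K ↥(P ⊓ Q) ≤ 1 := by
    refine finrank_le_one_of_forall_const fun T hT => ?_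
    have hTp := mem_invariantFunctions.1 hT.1
    have hTq := mem_invariantFunctions.1 hT.2
    exact hconn T hTq fun d => (hTq (r d)).symm.trans (hTp d)
  have hRP : finrank K ↥(R ⊓ P) ≤ 1 := by
    refine finrank_le_one_of_forall_const fun T hT => ?_
    have hTr := mem_invariantFunctions.1 hT.1
    have hTp := mem_invariantFunctions.1 hT.2
    refine hconn T (fun d => ?_) hTr
    simpa using (hTp (r⁻¹ d)).trans (hTr (r⁻¹ d)).symm
  have hle := map_coboundary_mul_le_dotOrthogonal (K := K) q r
  have hdim : finrank K (dotOrthogonal (P ⊔ Q)) ≤ finrank K (R.map (coboundary K (q * r))) := by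
    rw [Nat.card_eq_fintype_card] at hgenus
    have hperp := finrank_dotOrthogonal (P ⊔ Q)
    have hsup := Submodule.finrank_sup_add_finrank_inf_eq P Q
    have hmap : _ + finrank K ↥(R ⊓ P) = _ :=
      finrank_map_add_finrank_inf_ker (coboundary K (q * r)) R
    omega
  have hγ : γ ∈ R.map (coboundary K (q * r)) :=
    Submodule.eq_of_le_of_finrank_le hle hdim ▸ mem_dotOrthogonal_sup.2 ⟨hγp, hγq⟩
  exact hγ

end InvariantFunctions

namespace IsKConnected

variable {V β : Type*} [Fintype V] {G : SimpleGraph V} {k l : ℕ}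

theorem mono (hG : IsKConnected k G) (hlk : l ≤ k) : IsKConnected l G :=
  ⟨by have := hG.1; omega, fun X hX => hG.2 X (hX.trans_le hlk)⟩

theorem connected (hG : IsKConnected k G) (hk : 0 < k) : G.Connected := by
  have h := hG.2 ∅ (by simpa)
  rw [Finset.coe_empty, Set.compl_empty] at h
  exact induceUnivIso G |>.connected_iff.1 h

theorem apply_eq_of_forall_adj (hG : IsKConnected k G) {X : Finset V} (hX : X.card < k)
    {f : V → β} (hf : ∀ x y, G.Adj x y → x ∉ X → y ∉ X → f x = f y) {x y : V}
    (hx : x ∉ X) (hy : y ∉ X) :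
    f x = f y := by
  obtain ⟨walk⟩ := (hG.2 X hX).preconnected ⟨x, hx⟩ ⟨y, hy⟩
  have h : ∀ u u' : ↥((↑X : Set V)ᶜ), (G.induce (↑X : Set V)ᶜ).Walk u u' → f u = f u' := by
    intro u u' walk
    induction walk with
    | nil => rfl
    | @cons u u' _ hadj _ ih => exact (hf u u' hadj u.2 u'.2).trans ih
  exact h _ _ walk

theorem exists_dart_snd_notMem (hG : IsKConnected k G) (v : V) {Y : Finset V} (hY : Y.card < k) :
    ∃ d : G.Dart, d.fst = v ∧ d.snd ∉ Y := by
  classical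
  by_contra! hno
  obtain ⟨z, hz⟩ : ∃ z, z ∉ insert v Y := by
    by_contra! hall
    have := Finset.card_le_card fun z (_ : z ∈ Finset.univ) => hall z
    have := Finset.card_insert_le v Y
    have := hG.1
    rw [Finset.card_univ] at *
    omega
  rw [Finset.mem_insert, not_or] at hz
  have hX : (Y.erase v).card < k := (Finset.card_erase_le).trans_lt hY
  have hadj : ∀ x y, G.Adj x y → y ∉ Y.erase v → x ≠ v := by
    rintro x y hxy hy rfl
    exact hy (Finset.mem_erase.2 ⟨hxy.ne', hno ⟨(x, y), hxy⟩ rfl⟩)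
  have h := hG.apply_eq_of_forall_adj hX (f := fun x => x = v) (x := v) (y := z)
    (fun x y hxy hx hy => propext
      ⟨fun h => (hadj x y hxy hy h).elim, fun h => (hadj y x hxy.symm hx h).elim⟩)
    (by simp) (by simp [hz.2])
  exact hz.1 (h.mp rfl)

end IsKConnected

/-- The permutation of the darts that reverses every dart. -/
def dartReversal {V : Type*} (G : SimpleGraph V) : Equiv.Perm G.Dart :=
  Function.Involutive.toPerm Dart.symm Dart.symm_symm

namespace RotationSystem

variable {V : Type*} {G : SimpleGraph V} (ρ : RotationSystem G) {d d' : G.Dart}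

theorem facePerm_apply (d : G.Dart) : ρ.facePerm d = ρ.toPerm d.symm := rfl

theorem facePerm_symm (d : G.Dart) : ρ.facePerm d.symm = ρ.toPerm d := by
  rw [facePerm_apply, d.symm_symm]

theorem fst_toPerm_inv (d : G.Dart) : (ρ.toPerm⁻¹ d).fst = d.fst := by
  simpa using (ρ.fst_eq (ρ.toPerm⁻¹ d)).symm

theorem sameCycle_toPerm_iff : ρ.toPerm.SameCycle d d' ↔ d.fst = d'.fst := by
  refine ⟨fun h => (apply_eq_of_sameCycle_s7 (f := (·.fst)) ρ.fst_eq h).symm, fun h => ?_⟩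
  obtain ⟨n, rfl⟩ := ρ.single_orbit d d' h
  exact Equiv.Perm.sameCycle_pow_right.2 .rfl

variable {ρ} in
theorem apply_eq_of_fst_eq [Finite V] {β : Type*} {T : G.Dart → β}
    (hT : ∀ x : G.Dart, x.fst = d.fst → T (ρ.toPerm x) = T x) (h : d.fst = d'.fst) :
    T d = T d' := by
  classical
  have := Fintype.ofFinite V
  refine (of_sameCycle (P := fun x => T x = T d) (ρ.sameCycle_toPerm_iff.2 h) rfl ?_).symm
  exact fun x hx hTx => (hT x (ρ.sameCycle_toPerm_iff.1 hx).symm).trans hTx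

section KConnected

variable [Fintype V] {β : Type*} {k : ℕ}

theorem toPerm_toPerm_ne (hG : IsKConnected 3 G) (d : G.Dart) : ρ.toPerm (ρ.toPerm d) ≠ d := by
  classical
  intro hd
  obtain ⟨d', hd', hsnd⟩ := hG.exists_dart_snd_notMem d.fst (Y := {d.snd, (ρ.toPerm d).snd})
    (Finset.card_le_two.trans_lt (by omega))
  rcases of_sameCycle (P := fun x => x = d ∨ x = ρ.toPerm d)
    (ρ.sameCycle_toPerm_iff.2 hd'.symm) (.inl rfl) (by rintro x - (rfl | rfl) <;> simp [hd])
    with rfl | rfl <;> simp at hsnd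

theorem toPerm_ne (hG : IsKConnected 3 G) (d : G.Dart) : ρ.toPerm d ≠ d :=
  fun h => ρ.toPerm_toPerm_ne hG d (by rw [h, h])

theorem apply_eq_of_fst_notMem (hG : IsKConnected k G) {X : Finset V} (hX : X.card < k)
    {T : G.Dart → β} (hsymm : ∀ d : G.Dart, T d.symm = T d)
    (hrot : ∀ d : G.Dart, d.fst ∉ X → T (ρ.toPerm d) = T d) (hd : d.fst ∉ X) (hd' : d'.fst ∉ X) :
    T d = T d' := by
  have hval : ∀ d : G.Dart, d.fst ∉ X → {t | ∃ x : G.Dart, x.fst = d.fst ∧ T x = t} = {T d} := by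
    intro d hd
    ext t
    exact ⟨fun ⟨x, hx, ht⟩ =>
      ht ▸ (apply_eq_of_fst_eq (fun y hy => hrot y (hy ▸ hd)) hx.symm).symm,
      fun ht => ⟨d, rfl, ht.symm⟩⟩
  -- The common value at a vertex is recorded as a set because there may be no dart to choose.
  have h := hG.apply_eq_of_forall_adj hX (f := fun v => {t | ∃ x : G.Dart, x.fst = v ∧ T x = t})
    (fun x y hxy hx hy => by
      have h : ∀ e : G.Dart, e.fst ∉ X → e.snd ∉ X → _ = _ := fun e he he' =>
        (hval e he).trans ((hsymm e) ▸ (hval e.symm he').symm)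
      exact h ⟨(x, y), hxy⟩ hx hy) hd hd'
  simpa [hval d hd, hval d' hd'] using h

theorem apply_eq_of_symm_of_toPerm (hG : IsKConnected k G) (hk : 0 < k) {T : G.Dart → β}
    (hsymm : ∀ d : G.Dart, T d.symm = T d) (hrot : ∀ d, T (ρ.toPerm d) = T d) (d d' : G.Dart) :
    T d = T d' :=
  ρ.apply_eq_of_fst_notMem hG (X := ∅) hk hsymm (fun d _ => hrot d) (by simp) (by simp)

end KConnected

section Planar

variable [Fintype V] {ρ} {k : ℕ}

theorem IsPlanar.card_add_two_le (hρ : ρ.IsPlanar) (hG : IsKConnected 1 G) :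
    Nat.card G.Dart + 2 ≤ finrank ℚ (invariantFunctions ℚ ρ.toPerm) +
      finrank ℚ (invariantFunctions ℚ ρ.facePerm) +
      finrank ℚ (invariantFunctions ℚ (dartReversal G)) := by
  classical
  have hconn := hG.connected one_pos
  have : Nontrivial V := Fintype.one_lt_card_iff_nontrivial.1 hG.1
  have hdart : ∀ v, ∃ d : G.Dart, d.fst = v := fun v =>
    (hG.exists_dart_snd_notMem v (Y := ∅) one_pos).imp fun _ h => h.1
  obtain ⟨d⟩ : Nonempty G.Dart := ⟨(hdart hconn.nonempty.some).choose⟩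
  have hV := card_le_finrank_invariantFunctions (K := ℚ) (p := ρ.toPerm)
    (π := fun d : G.Dart => d.fst) hdart ρ.fst_eq
  have hF := card_le_finrank_invariantFunctions (K := ℚ) (p := ρ.facePerm)
    (π := Quotient.mk ρ.faceSetoid) Quotient.mk_surjective
    fun d => Quotient.sound (Equiv.Perm.sameCycle_apply_left.2 .rfl)
  have hE : Nat.card G.edgeSet ≤ finrank ℚ (invariantFunctions ℚ (dartReversal G)) :=
    card_le_finrank_invariantFunctions (π := fun d : G.Dart => (⟨d.edge, d.edge_mem⟩ : G.edgeSet))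
      (fun ⟨e, he⟩ => by
        induction e with | _ x y => exact ⟨⟨(x, y), he⟩, rfl⟩)
      fun d => Subtype.ext d.edge_symm
  have hDE := G.dart_card_eq_twice_card_edges
  have hmk : ∀ v, G.connectedComponentMk v = G.connectedComponentMk d.fst := fun v =>
    ConnectedComponent.eq.2 (hconn.preconnected v d.fst)
  have heuler := hρ (G.connectedComponentMk d.fst) ⟨d, rfl⟩
  rw [Nat.card_congr (Equiv.subtypeUnivEquiv fun v => hmk v),
    Nat.card_congr (Equiv.subtypeUnivEquiv fun q => hmk _),
    Nat.card_congr (Equiv.subtypeUnivEquiv fun d => hmk _)] at heuler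
  rw [Nat.card_eq_fintype_card, ← edgeFinset_card] at hE
  rw [Nat.card_eq_fintype_card (α := G.Dart)] at heuler ⊢
  omega

theorem IsPlanar.exists_symm_sub_eq [Fintype G.Dart] (hρ : ρ.IsPlanar) (hG : IsKConnected 1 G)
    {γ : G.Dart → ℚ} (hvertex : ∀ g ∈ invariantFunctions ℚ ρ.toPerm, g ⬝ᵥ γ = 0)
    (hface : ∀ g ∈ invariantFunctions ℚ ρ.facePerm, g ⬝ᵥ γ = 0) :
    ∃ T : G.Dart → ℚ, (∀ d : G.Dart, T d.symm = T d) ∧ ∀ d,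
      T (ρ.toPerm d) - T d = γ (ρ.toPerm d) := by
  have hfac : ρ.toPerm = ρ.facePerm * dartReversal G := Equiv.ext fun d => (ρ.facePerm_symm d).symm
  obtain ⟨T, hT, hTγ⟩ := exists_coboundary_eq hfac
    (fun T hφ hα => ρ.apply_eq_of_symm_of_toPerm hG one_pos hα
      fun d => by rw [← facePerm_symm, hφ]; exact hα d)
    (hρ.card_add_two_le hG) hvertex hface
  refine ⟨T, mem_invariantFunctions.1 hT, fun d => ?_⟩
  rw [← hTγ, coboundary_apply, Equiv.Perm.inv_def, Equiv.symm_apply_apply]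

theorem IsPlanar.exists_sub_symm_eq {ρ' : RotationSystem G} (hρ' : ρ'.IsPlanar)
    (hG : IsKConnected 1 G) {s : G.Dart → ℚ} (hs : ∀ d, s (ρ.facePerm d) = s d) :
    ∃ T : G.Dart → ℚ, (∀ d, T (ρ'.facePerm d) = T d) ∧
      ∀ d : G.Dart, T d - T d.symm = s d - s d.symm := by
  classical
  have hfac : dartReversal G = ρ'.toPerm⁻¹ * ρ'.facePerm :=
    Equiv.ext fun d => (ρ'.toPerm.symm_apply_apply d.symm).symm
  have hconn : ∀ T : G.Dart → ℚ, (∀ d, T (ρ'.toPerm⁻¹ d) = T d) → (∀ d, T (ρ'.facePerm d) = T d) →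
      ∀ d d', T d = T d' := by
    intro T hσ hφ
    have hσ' : ∀ d, T (ρ'.toPerm d) = T d := fun d => by simpa using (hσ (ρ'.toPerm d)).symm
    exact ρ'.apply_eq_of_symm_of_toPerm hG one_pos (fun d => (hσ' d.symm).symm.trans (hφ d)) hσ'
  have hvertex : ∀ g ∈ invariantFunctions ℚ ρ'.toPerm⁻¹,
      g ⬝ᵥ coboundary ℚ (dartReversal G) s = 0 := by
    intro g hg
    rw [invariantFunctions_inv, mem_invariantFunctions] at hg
    have hγ : coboundary ℚ (dartReversal G) s = coboundary ℚ ρ.toPerm⁻¹ s := funext fun d =>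
      congrArg (s d - ·) ((hs d.symm).symm.trans (congrArg s (ρ.facePerm_symm d)))
    rw [hγ]
    refine dotProduct_coboundary_eq_zero ?_ s
    rw [invariantFunctions_inv, mem_invariantFunctions]
    exact fun d => apply_eq_of_fst_eq (fun x _ => hg x) (ρ.fst_eq d)
  have hgenus := hρ'.card_add_two_le hG
  obtain ⟨T, hT, hTs⟩ := exists_coboundary_eq hfac hconn
    (by rw [invariantFunctions_inv]; omega)
    (fun g hg => dotProduct_coboundary_eq_zero hg s) hvertex
  exact ⟨T, mem_invariantFunctions.1 hT, congrFun hTs⟩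

/-- `γ` is a closed curve that meets `G` only in `X`, and `T` below is its winding number. -/
theorem IsPlanar.snd_mem_of_ne_zero [Fintype G.Dart] (hρ : ρ.IsPlanar) (hG : IsKConnected k G)
    {X : Finset V} (hX : X.card < k) {γ : G.Dart → ℚ}
    (hvertex : ∀ g ∈ invariantFunctions ℚ ρ.toPerm, g ⬝ᵥ γ = 0)
    (hface : ∀ g ∈ invariantFunctions ℚ ρ.facePerm, g ⬝ᵥ γ = 0)
    (hγ : ∀ d : G.Dart, d.fst ∉ X → γ d = 0) (hd : γ d ≠ 0) :
    (ρ.toPerm⁻¹ d).snd ∈ X ∨ d.snd ∈ X := by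
  obtain ⟨T, hsymm, hT⟩ := hρ.exists_symm_sub_eq (hG.mono (Nat.one_le_of_lt hX)) hvertex hface
  by_contra! ⟨hsnd', hsnd⟩
  have hconst := ρ.apply_eq_of_fst_notMem hG hX hsymm
    (fun d hd => sub_eq_zero.1 ((hT d).trans (hγ _ ((ρ.fst_eq d).symm ▸ hd))))
    (d := d.symm) (d' := (ρ.toPerm⁻¹ d).symm) hsnd hsnd'
  rw [hsymm, hsymm] at hconst
  have hjump := hT (ρ.toPerm⁻¹ d)
  rw [Equiv.Perm.inv_def, Equiv.apply_symm_apply] at hjump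
  exact hd (hjump ▸ sub_eq_zero.2 hconst)

theorem IsPlanar.eq_of_sameCycle_facePerm (hρ : ρ.IsPlanar) (hG : IsKConnected 2 G)
    (hfst : d.fst = d'.fst) (hface : ρ.facePerm.SameCycle d d') : d = d' := by
  classical
  by_contra hne
  have hdot : ∀ g : G.Dart → ℚ, g ⬝ᵥ (Pi.single d 1 - Pi.single d' 1) = g d - g d' := by
    simp [dotProduct_sub]
  have hmem := hρ.snd_mem_of_ne_zero hG (X := {d.fst}) (d := d) (by simp)
    (γ := Pi.single d 1 - Pi.single d' 1)
    (fun g hg => by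
      rw [hdot, sub_eq_zero]
      exact apply_eq_of_fst_eq (fun x _ => mem_invariantFunctions.1 hg x) hfst)
    (fun g hg => by
      rw [hdot, sub_eq_zero]
      exact (apply_eq_of_sameCycle_s7 (mem_invariantFunctions.1 hg) hface).symm)
    (fun x hx => by
      have hxd : x ≠ d := by rintro rfl; simp at hx
      have hxd' : x ≠ d' := by rintro rfl; simp [hfst] at hx
      simp [hxd, hxd'])
    (by simp [hne])
  rw [Finset.mem_singleton, Finset.mem_singleton, ← ρ.fst_toPerm_inv d] at hmem
  rcases hmem with h | h
  · exact (ρ.toPerm⁻¹ d).adj.ne' h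
  · exact d.adj.ne' (h.trans (ρ.fst_toPerm_inv d))

theorem IsPlanar.snd_eq_of_sameCycle_facePerm (hρ : ρ.IsPlanar) (hG : IsKConnected 3 G)
    {d₁ d₁' d₂ d₂' : G.Dart} (hfst : d₁.fst = d₁'.fst) (hfst₂ : d₂.fst = d₂'.fst)
    (hne : d₁ ≠ d₁') (hv : d₁.fst ≠ d₂.fst) (hface : ρ.facePerm.SameCycle d₁ d₂)
    (hface' : ρ.facePerm.SameCycle d₁' d₂') :
    (ρ.toPerm⁻¹ d₁).snd = d₂.fst ∨ d₁.snd = d₂.fst := by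
  classical
  -- a closed curve through two vertices and two faces
  let γ : G.Dart → ℚ := Pi.single d₁ 1 - Pi.single d₁' 1 - (Pi.single d₂ 1 - Pi.single d₂' 1)
  have hdot : ∀ g : G.Dart → ℚ, g ⬝ᵥ γ = g d₁ - g d₁' - (g d₂ - g d₂') := by
    simp [γ, dotProduct_sub]
  have hvertex : ∀ g ∈ invariantFunctions ℚ ρ.toPerm, g ⬝ᵥ γ = 0 := fun g hg => by
    have hg := mem_invariantFunctions.1 hg
    rw [hdot, apply_eq_of_fst_eq (fun x _ => hg x) hfst,
      apply_eq_of_fst_eq (fun x _ => hg x) hfst₂]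
    ring
  have hfaces : ∀ g ∈ invariantFunctions ℚ ρ.facePerm, g ⬝ᵥ γ = 0 := fun g hg => by
    have hg := mem_invariantFunctions.1 hg
    rw [hdot, apply_eq_of_sameCycle_s7 hg hface, apply_eq_of_sameCycle_s7 hg hface']
    ring
  have hoff : ∀ d : G.Dart, d.fst ∉ ({d₁.fst, d₂.fst} : Finset V) → γ d = 0 := by
    intro d hd
    have h₁ : d ≠ d₁ := by rintro rfl; simp at hd
    have h₁' : d ≠ d₁' := by rintro rfl; simp [hfst] at hd
    have h₂ : d ≠ d₂ := by rintro rfl; simp at hd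
    have h₂' : d ≠ d₂' := by rintro rfl; simp [hfst₂] at hd
    simp [γ, h₁, h₁', h₂, h₂']
  have hd₁ : γ d₁ ≠ 0 := by
    have hd₂ : d₁ ≠ d₂ := by rintro rfl; exact hv rfl
    have hd₂' : d₁ ≠ d₂' := by rintro rfl; exact hv hfst₂.symm
    simp [γ, hne, hd₂, hd₂']
  have hmem := hρ.snd_mem_of_ne_zero hG (Finset.card_le_two.trans_lt (by omega)) hvertex hfaces
    hoff hd₁
  have hsnd : (ρ.toPerm⁻¹ d₁).snd ≠ d₁.fst := ρ.fst_toPerm_inv d₁ ▸ (ρ.toPerm⁻¹ d₁).adj.ne'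
  simpa only [Finset.mem_insert, Finset.mem_singleton, hsnd, d₁.adj.ne', false_or] using hmem

theorem IsPlanar.toPerm_eq_of_sameCycle_facePerm (hρ : ρ.IsPlanar) (hG : IsKConnected 3 G)
    {d₁ d₁' d₂ d₂' : G.Dart} (hfst : d₁.fst = d₁'.fst) (hfst₂ : d₂.fst = d₂'.fst)
    (hne : d₁ ≠ d₁') (hv : d₁.fst ≠ d₂.fst) (hface : ρ.facePerm.SameCycle d₁ d₂)
    (hface' : ρ.facePerm.SameCycle d₁' d₂') :
    (d₁.snd = d₂.fst ∧ ρ.toPerm d₁ = d₁') ∨ (d₁'.snd = d₂.fst ∧ ρ.toPerm d₁' = d₁) := by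
  have hto : ∀ d d' : G.Dart, d.fst = d₁.fst → d'.fst = d₁.fst → d.snd = d₂.fst →
      d'.snd = d₂.fst → d = d' := fun d d' h h' hs hs' =>
    Dart.ext _ _ (Prod.ext (h.trans h'.symm) (hs.trans hs'.symm))
  have hinv : (ρ.toPerm⁻¹ d₁).fst = d₁.fst := ρ.fst_toPerm_inv d₁
  have hinv' : (ρ.toPerm⁻¹ d₁').fst = d₁.fst := (ρ.fst_toPerm_inv d₁').trans hfst.symm
  have hsnd := hρ.snd_eq_of_sameCycle_facePerm hG hfst hfst₂ hne hv hface hface'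
  have hsnd' := hρ.snd_eq_of_sameCycle_facePerm hG hfst.symm hfst₂.symm hne.symm
    (hfst ▸ hfst₂ ▸ hv) hface' hface
  rw [← hfst₂] at hsnd'
  rcases hsnd, hsnd' with ⟨h | h, h' | h'⟩
  · exact absurd (ρ.toPerm⁻¹.injective (hto _ _ hinv hinv' h h')) hne
  · refine .inr ⟨h', ?_⟩
    rw [← hto _ _ hinv hfst.symm h h', Equiv.Perm.inv_def, Equiv.apply_symm_apply]
  · refine .inl ⟨h, ?_⟩
    rw [hto _ _ rfl hinv' h h', Equiv.Perm.inv_def, Equiv.apply_symm_apply]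
  · exact absurd (hto _ _ rfl hfst.symm h h') hne

end Planar

/-- The face containing the dart `e`, as a set of darts. -/
def face (e : G.Dart) : Set G.Dart :=
  {d | ρ.facePerm.SameCycle e d}

/-- The darts lying, in either direction, on the boundary of the face containing `e`. -/
def faceBoundary (e : G.Dart) : Set G.Dart :=
  {d | d ∈ ρ.face e ∨ d.symm ∈ ρ.face e}

section Face

variable {ρ} {e x y : G.Dart}

theorem facePerm_mem_face : ρ.facePerm d ∈ ρ.face e ↔ d ∈ ρ.face e :=
  Equiv.Perm.sameCycle_apply_right

theorem toPerm_mem_face : ρ.toPerm d ∈ ρ.face e ↔ d.symm ∈ ρ.face e :=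
  facePerm_symm ρ d ▸ facePerm_mem_face

theorem mem_faceBoundary :
    d ∈ ρ.faceBoundary e ↔ d ∈ ρ.face e ∨ d.symm ∈ ρ.face e := .rfl

theorem symm_mem_faceBoundary : d.symm ∈ ρ.faceBoundary e ↔ d ∈ ρ.faceBoundary e := by
  rw [mem_faceBoundary, mem_faceBoundary, d.symm_symm, or_comm]

theorem notMem_faceBoundary (h : ∀ x ∈ ρ.face e, x.fst ≠ d.fst) : d ∉ ρ.faceBoundary e := by
  rintro (hd | hd)
  · exact h d hd rfl
  · exact h _ (toPerm_mem_face.2 hd) (ρ.fst_eq d)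

variable [Fintype V] (hρ : ρ.IsPlanar) (hG : IsKConnected 3 G)
include hρ hG

theorem IsPlanar.eq_of_mem_face (hx : x ∈ ρ.face e) (hy : y ∈ ρ.face e) (h : x.fst = y.fst) :
    x = y :=
  hρ.eq_of_sameCycle_facePerm (hG.mono (by omega)) h (hx.symm.trans hy)

theorem IsPlanar.symm_notMem_face (hx : x ∈ ρ.face e) : x.symm ∉ ρ.face e := fun h =>
  ρ.toPerm_ne hG x (hρ.eq_of_mem_face hG (toPerm_mem_face.2 h) hx (ρ.fst_eq x))

theorem IsPlanar.toPerm_notMem_faceBoundary (hx : x ∈ ρ.face e) :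
    ρ.toPerm x ∉ ρ.faceBoundary e := by
  rintro (h | h)
  · exact ρ.toPerm_ne hG x (hρ.eq_of_mem_face hG h hx (ρ.fst_eq x))
  · exact ρ.toPerm_toPerm_ne hG x (hρ.eq_of_mem_face hG (toPerm_mem_face.2 h) hx
      ((ρ.fst_eq _).trans (ρ.fst_eq x)))

theorem IsPlanar.eq_or_eq_of_mem_faceBoundary (hd : d.symm ∈ ρ.face e)
    (hy : y ∈ ρ.faceBoundary e) (h : y.fst = d.fst) : y = ρ.toPerm d ∨ y = d := by
  have hσd : ρ.toPerm d ∈ ρ.face e := toPerm_mem_face.2 hd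
  refine hy.imp (fun hy => ?_) fun hy => ρ.toPerm.injective ?_
  · exact hρ.eq_of_mem_face hG hy hσd (h.trans (ρ.fst_eq d).symm)
  · exact hρ.eq_of_mem_face hG (toPerm_mem_face.2 hy) hσd
      ((ρ.fst_eq y).trans (h.trans (ρ.fst_eq d).symm))

/-- The edge joining the two vertices would otherwise lie on both faces. -/
theorem IsPlanar.toPerm_eq_or_toPerm_eq_of_mem_face (hd : d ∉ ρ.face e) (hne : d ≠ d')
    (hface : ρ.facePerm.SameCycle d d') (hx : x ∈ ρ.face e) (hy : y ∈ ρ.face e)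
    (hxd : x.fst = d.fst) (hyd : y.fst = d'.fst) : ρ.toPerm x = d ∨ ρ.toPerm y = d' := by
  have hd' : d' ∉ ρ.face e := fun h => hd (h.trans hface.symm)
  have hdx : d ≠ x := fun h => hd (h ▸ hx)
  have hdy : d' ≠ y := fun h => hd' (h ▸ hy)
  have hv : d.fst ≠ d'.fst := fun h =>
    hne (hρ.eq_of_sameCycle_facePerm (hG.mono (by omega)) h hface)
  have hxy : ρ.facePerm.SameCycle x y := hx.symm.trans hy
  rcases hρ.toPerm_eq_of_sameCycle_facePerm hG hxd.symm hyd.symm hdx hv hface hxy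
    with ⟨hs, -⟩ | ⟨-, h⟩
  · rcases hρ.toPerm_eq_of_sameCycle_facePerm hG hyd.symm hxd.symm hdy hv.symm hface.symm hxy.symm
      with ⟨hs', h'⟩ | ⟨-, h'⟩
    · have hdd' : d' = d.symm := Dart.ext _ _ (Prod.ext hs.symm hs')
      rw [hdd', ← facePerm_apply] at h'
      exact absurd (facePerm_mem_face.1 (h'.symm ▸ hy)) hd
    · exact .inr h'
  · exact .inl h

variable {β : Type*} {T : G.Dart → β}

theorem IsPlanar.apply_toPerm_of_notMem_face (hsymm : ∀ d : G.Dart, T d.symm = T d)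
    (hoff : ∀ d : G.Dart, (∀ x ∈ ρ.face e, x.fst ≠ d.fst) → T (ρ.toPerm d) = T d)
    (hon : ∀ x ∈ ρ.face e, T (ρ.toPerm x) = T x) (hd : ρ.toPerm d ∉ ρ.face e) :
    T (ρ.toPerm d) = T d := by
  classical
  by_cases hx : ∀ x ∈ ρ.face e, x.fst ≠ d.fst
  · exact hoff d hx
  push Not at hx
  obtain ⟨x, hx, hxd⟩ := hx
  by_cases hdx : x = d
  · exact hon d (hdx ▸ hx)
  rw [← hsymm d, ← facePerm_symm]
  refine apply_eq_of_forall_ne fun c hface hne => ?_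
  rw [facePerm_apply, ← hsymm c]
  by_cases hy : ∀ y ∈ ρ.face e, y.fst ≠ c.symm.fst
  · exact hoff _ hy
  push Not at hy
  obtain ⟨y, hy, hyc⟩ := hy
  have hne' : ρ.toPerm d ≠ ρ.toPerm c.symm := fun hdc =>
    hne (by rw [ρ.toPerm.injective hdc, c.symm_symm])
  have hface' : ρ.facePerm.SameCycle (ρ.toPerm d) (ρ.toPerm c.symm) := by
    rw [← facePerm_symm, ← facePerm_apply]
    simpa using hface
  rcases hρ.toPerm_eq_or_toPerm_eq_of_mem_face hG hd hne' hface' hx hy (hxd.trans (ρ.fst_eq d).symm)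
    (hyc.trans (ρ.fst_eq _).symm) with hσ | hσ
  · exact absurd (ρ.toPerm.injective hσ) hdx
  · rw [← ρ.toPerm.injective hσ]
    exact hon y hy

theorem IsPlanar.apply_eq_of_symm_of_face (hsymm : ∀ d : G.Dart, T d.symm = T d)
    (hoff : ∀ d : G.Dart, (∀ x ∈ ρ.face e, x.fst ≠ d.fst) → T (ρ.toPerm d) = T d)
    (hon : ∀ x ∈ ρ.face e, T (ρ.toPerm x) = T x) (d d' : G.Dart) : T d = T d' := by
  classical
  have hcorner : ∀ d, ρ.toPerm d ∉ ρ.face e → T (ρ.toPerm d) = T d := fun d hd =>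
    hρ.apply_toPerm_of_notMem_face hG hsymm hoff hon hd
  have hrot : ∀ d, T (ρ.toPerm d) = T d := fun d => by
    by_cases hd : ρ.toPerm d ∈ ρ.face e
    · refine apply_eq_of_forall_ne fun x hx hne => hcorner x fun hx' => hne ?_
      refine ρ.toPerm.injective (hρ.eq_of_mem_face hG hx' hd ?_)
      rw [ρ.fst_eq, ρ.fst_eq, ρ.sameCycle_toPerm_iff.1 hx]
    · exact hcorner d hd
  exact ρ.apply_eq_of_symm_of_toPerm hG (by omega) hsymm hrot d d'

theorem IsPlanar.apply_eq_of_notMem_faceBoundary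
    (hsymm : ∀ d : G.Dart, d ∉ ρ.faceBoundary e → T d.symm = T d)
    (hoff : ∀ d : G.Dart, (∀ x ∈ ρ.face e, x.fst ≠ d.fst) → T (ρ.toPerm d) = T d)
    (hd : d ∉ ρ.faceBoundary e) (hd' : d' ∉ ρ.faceBoundary e) : T d = T d' := by
  classical
  -- A boundary edge gets the value of the edge that follows it in the rotation at one end.
  let T' : G.Dart → β := fun d =>
    if d ∈ ρ.face e then T (ρ.toPerm d) else
    if d.symm ∈ ρ.face e then T (ρ.toPerm d.symm) else T d
  have hT' : ∀ d, d ∉ ρ.faceBoundary e → T' d = T d := fun d hd => by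
    rw [mem_faceBoundary, not_or] at hd
    simp only [T', if_neg hd.1, if_neg hd.2]
  have hsymm' : ∀ d : G.Dart, T' d.symm = T' d := fun d => by
    by_cases hd : d ∈ ρ.faceBoundary e
    · rcases hd with hd | hd
      · simp only [T', d.symm_symm, if_pos hd, if_neg (hρ.symm_notMem_face hG hd)]
      · have hd' := hρ.symm_notMem_face hG hd
        rw [d.symm_symm] at hd'
        simp only [T', if_pos hd, if_neg hd']
    · rw [hT' _ hd, hT' _ (symm_mem_faceBoundary.not.2 hd), hsymm d hd]
  rw [← hT' d hd, ← hT' d' hd']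
  refine hρ.apply_eq_of_symm_of_face hG (e := e) hsymm' (fun d hd => ?_) (fun x hx => ?_) d d'
  · rw [hT' _ (notMem_faceBoundary hd),
      hT' _ (notMem_faceBoundary fun x hx => (ρ.fst_eq d).symm ▸ hd x hx), hoff d hd]
  · rw [hT' _ (hρ.toPerm_notMem_faceBoundary hG hx)]
    exact (if_pos hx).symm

variable {ρ' : RotationSystem G} (hρ' : ρ'.IsPlanar)
include hρ'

theorem IsPlanar.exists_side (e : G.Dart) :
    ∃ (T : G.Dart → ℚ) (c : ℚ), (∀ d, T (ρ'.facePerm d) = T d) ∧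
      (∀ d ∉ ρ.faceBoundary e, T d = c) ∧ ∀ d ∈ ρ.face e, T d ≠ T d.symm := by
  classical
  -- A Jordan curve argument: the facial cycle of `ρ` has an inside and an outside in the embedding
  -- `ρ'`, and all of the rest of the graph lies on one side of it.
  obtain ⟨T, hT, hTs⟩ := hρ'.exists_sub_symm_eq (ρ := ρ) (hG.mono (by omega))
    (s := Set.indicator (ρ.face e) 1) fun d => by
      simp only [Set.indicator_apply, facePerm_mem_face]
      rfl
  refine ⟨T, T (ρ.toPerm e), hT, fun d hd => ?_, fun d hd => ?_⟩
  · have hsymm : ∀ d : G.Dart, d ∉ ρ.faceBoundary e → T d.symm = T d := fun d hd => by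
      rw [mem_faceBoundary, not_or] at hd
      have h := hTs d
      rw [Set.indicator_of_notMem hd.1, Set.indicator_of_notMem hd.2, sub_zero] at h
      exact (sub_eq_zero.1 h).symm
    refine hρ.apply_eq_of_notMem_faceBoundary hG hsymm (fun d hd => ?_) hd
      (hρ.toPerm_notMem_faceBoundary hG (.refl _ e))
    refine apply_eq_of_fst_eq (ρ := ρ') (fun x hx => ?_) (ρ.fst_eq d)
    rw [← ρ'.facePerm_symm, hT]
    exact hsymm x (notMem_faceBoundary fun y hy => by rw [hx, ρ.fst_eq]; exact hd y hy)
  · have h := hTs d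
    rw [Set.indicator_of_mem hd, Set.indicator_of_notMem (hρ.symm_notMem_face hG hd)] at h
    intro heq
    simp [heq] at h

theorem IsPlanar.toPerm_eq_or_toPerm_toPerm_eq_of_face (e : G.Dart) :
    (∀ d : G.Dart, d.symm ∈ ρ.face e → ρ'.toPerm d = ρ.toPerm d) ∨
      ∀ d : G.Dart, d.symm ∈ ρ.face e → ρ'.toPerm (ρ.toPerm d) = d := by
  classical
  obtain ⟨T, c, hT, hc, hne⟩ := hρ.exists_side hG hρ' e
  have hmem : ∀ d, T d ≠ c → d ∈ ρ.faceBoundary e := fun d => not_imp_comm.1 (hc d)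
  have hT' : ∀ d : G.Dart, T (ρ'.toPerm d) = T d.symm := fun d => by
    rw [← hT d.symm, facePerm_symm]
  have hforward : ∀ d : G.Dart, d.symm ∈ ρ.face e → T d.symm ≠ c →
      ρ'.toPerm d = ρ.toPerm d := fun d hd hTd =>
    (hρ.eq_or_eq_of_mem_faceBoundary hG hd (hmem _ (by rwa [hT'])) (ρ'.fst_eq d)).resolve_right
      (ρ'.toPerm_ne hG d)
  have hbackward : ∀ d : G.Dart, d.symm ∈ ρ.face e → T d ≠ c →
      ρ'.toPerm (ρ.toPerm d) = d := fun d hd hTd => by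
    obtain ⟨y, rfl⟩ := ρ'.toPerm.surjective d
    rw [hT'] at hTd
    have hy := symm_mem_faceBoundary.1 (hmem _ hTd)
    rw [← (hρ.eq_or_eq_of_mem_faceBoundary hG hd hy (ρ'.fst_eq y).symm).resolve_right
      (ρ'.toPerm_ne hG y).symm]
  by_cases he : T e = c
  · refine .inr fun d hd => hbackward d hd ?_
    have h := of_sameCycle (P := fun x => T x.symm ≠ c) hd (he ▸ (hne e (.refl _ e)).symm)
      fun x hx hTx => by
        have := hbackward x.symm (by rwa [x.symm_symm]) hTx
        rw [← this] at hTx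
        rwa [hT'] at hTx
    rwa [d.symm_symm] at h
  · refine .inl fun d hd => hforward d hd (of_sameCycle (P := fun x => T x ≠ c) hd he ?_)
    intro x hx hTx
    rw [facePerm_apply, ← hforward x.symm (by rwa [x.symm_symm]) (by rwa [x.symm_symm]), hT',
      x.symm_symm]
    exact hTx

/-- Whitney's theorem. -/
theorem IsPlanar.toPerm_eq_or_eq_inv :
    ρ'.toPerm = ρ.toPerm ∨ ρ'.toPerm = ρ.toPerm⁻¹ := by
  let P : G.Dart → Prop := fun d => ρ'.toPerm d = ρ.toPerm d
  let Q : G.Dart → Prop := fun d => ρ'.toPerm (ρ.toPerm d) = d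
  have hPQ : ∀ d, P d ∨ Q d := fun d =>
    (hρ.toPerm_eq_or_toPerm_toPerm_eq_of_face hG hρ' d.symm).imp (· d (.refl _ _))
      (· d (.refl _ _))
  have hnot : ∀ d, Q d → ¬ P d := fun d hQ hP =>
    ρ'.toPerm_toPerm_ne hG d (by rw [hP]; exact hQ)
  have hrot : ∀ d, P (ρ.toPerm d) ↔ P d := fun d =>
    ⟨fun hP => (hPQ d).resolve_right fun hQ => ρ.toPerm_toPerm_ne hG d (hP.symm.trans hQ),
      fun hP => (hPQ _).resolve_right fun hQ =>
        ρ.toPerm_toPerm_ne hG d (ρ'.toPerm.injective (hQ.trans hP.symm))⟩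
  have hface : ∀ d, P (ρ.toPerm d).symm ↔ P d := fun d => by
    have hmem : (ρ.toPerm d).symm.symm ∈ ρ.face d.symm := by
      rw [Dart.symm_symm, toPerm_mem_face]
      exact .refl _ _
    rcases hρ.toPerm_eq_or_toPerm_toPerm_eq_of_face hG hρ' d.symm with h | h
    · exact iff_of_true (h _ hmem) (h d (.refl _ _))
    · exact iff_of_false (hnot _ (h _ hmem)) (hnot d (h d (.refl _ _)))
  have hsymm : ∀ d : G.Dart, P d.symm = P d := fun d => by
    obtain ⟨x, rfl⟩ := ρ.toPerm.surjective d
    exact propext ((hface x).trans (hrot x).symm)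
  have hconst := ρ.apply_eq_of_symm_of_toPerm hG (by omega) hsymm fun d => propext (hrot d)
  by_cases h : ∀ d, P d
  · exact .inl (Equiv.ext h)
  · obtain ⟨x, hx⟩ := not_forall.1 h
    refine .inr (eq_inv_of_mul_eq_one_left (Equiv.ext fun d => ?_))
    exact (hPQ d).resolve_left (hconst x d ▸ hx)

end Face

end RotationSystem

namespace RestrictMapsTo

variable {α : Type*} {σ : Equiv.Perm α} {S : Set α} {x y z : α}

theorem unique (h : RestrictMapsTo σ S x y) (hy : y ∈ S) (h' : RestrictMapsTo σ S x z)
    (hz : z ∈ S) : y = z := by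
  obtain ⟨n, hn, rfl, hnS⟩ := h
  obtain ⟨m, hm, rfl, hmS⟩ := h'
  rcases lt_trichotomy n m with hnm | rfl | hmn
  · exact absurd hy (hmS n hn hnm)
  · rfl
  · exact absurd hz (hnS m hm hmn)

protected theorem inv (h : RestrictMapsTo σ S x y) : RestrictMapsTo σ⁻¹ S y x := by
  obtain ⟨n, hn, rfl, hS⟩ := h
  refine ⟨n, hn, by simp, fun m hm hmn => ?_⟩
  have hpow : (σ⁻¹ ^ m) ((σ ^ n) x) = (σ ^ (n - m)) x := by
    rw [inv_pow, Equiv.Perm.inv_eq_iff_eq, ← Equiv.Perm.mul_apply, ← pow_add,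
      Nat.add_sub_cancel' hmn.le]
  rw [hpow]
  exact hS _ (by omega) (by omega)

theorem inv_iff : RestrictMapsTo σ⁻¹ S x y ↔ RestrictMapsTo σ S y x :=
  ⟨fun h => inv_inv σ ▸ h.inv, fun h => h.inv⟩

theorem exists_of_mem [Finite α] (σ : Equiv.Perm α) (hx : x ∈ S) :
    ∃ y ∈ S, RestrictMapsTo σ S x y := by
  classical
  have hreturn : ∃ n, 0 < n ∧ (σ ^ n) x ∈ S :=
    ⟨orderOf σ, orderOf_pos σ, by simpa [pow_orderOf_eq_one] using hx⟩
  obtain ⟨hpos, hmem⟩ := Nat.find_spec hreturn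
  exact ⟨_, hmem, _, hpos, rfl, fun m hm hlt hmS => Nat.find_min hreturn hlt ⟨hm, hmS⟩⟩

theorem eq_of_sameCycle [Finite α] (h : RestrictMapsTo σ S x x) (hy : y ∈ S)
    (hxy : σ.SameCycle x y) : y = x := by
  obtain ⟨n, hn, hx, hS⟩ := h
  obtain ⟨k, rfl⟩ := hxy.exists_nat_pow_eq
  have hmod : (σ ^ k) x = (σ ^ (k % n)) x := by
    have hper : Function.IsPeriodicPt σ n x := by
      rwa [Function.IsPeriodicPt, Function.IsFixedPt, ← Equiv.Perm.coe_pow]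
    rw [Equiv.Perm.coe_pow, Equiv.Perm.coe_pow, hper.iterate_mod_apply]
  rcases Nat.eq_zero_or_pos (k % n) with h0 | hpos
  · rw [hmod, h0, pow_zero, Equiv.Perm.one_apply]
  · exact absurd (hmod ▸ hy) (hS _ hpos (Nat.mod_lt k hn))

theorem exists_perm [Finite α] {ι : Type*} (σ : Equiv.Perm α) {a : ι → α}
    (ha : Function.Injective a) :
    ∃ ε : Equiv.Perm ι, ∀ i j, RestrictMapsTo σ (Set.range a) (a i) (a j) ↔ ε i = j := by
  have : Finite ι := .of_injective a ha
  have hnext : ∀ i, ∃ j, RestrictMapsTo σ (Set.range a) (a i) (a j) := fun i => by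
    obtain ⟨_, ⟨j, rfl⟩, h⟩ := exists_of_mem σ (Set.mem_range_self (f := a) i)
    exact ⟨j, h⟩
  choose next hnext using hnext
  have hinj : Function.Injective next := fun i j hij =>
    ha ((hnext i).inv.unique ⟨i, rfl⟩ (hij ▸ (hnext j).inv) ⟨j, rfl⟩)
  refine ⟨.ofBijective next (Finite.injective_iff_bijective.1 hinj), fun i j => ⟨fun h => ?_, ?_⟩⟩
  · exact ha ((hnext i).unique ⟨_, rfl⟩ h ⟨j, rfl⟩)
  · rintro rfl
    exact hnext i

end RestrictMapsTo

theorem RotationSystem.exists_restrict_perm {V : Type*} [Finite V] {G : SimpleGraph V}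
    (ρ : RotationSystem G) {ι : Type*} [Nontrivial ι] {a : ι → G.Dart}
    (ha : Function.Injective a) {v : V} (hav : ∀ i, (a i).fst = v) :
    ∃ ε : Equiv.Perm ι, (∀ i, ε i ≠ i) ∧
      ∀ i j, RestrictMapsTo ρ.toPerm (Set.range a) (a i) (a j) ↔ ε i = j := by
  classical
  have := Fintype.ofFinite V
  obtain ⟨ε, hε⟩ := RestrictMapsTo.exists_perm ρ.toPerm ha
  refine ⟨ε, fun i hi => ?_, hε⟩
  obtain ⟨j, hj⟩ := exists_ne i
  exact hj (ha (((hε i i).2 hi).eq_of_sameCycle ⟨j, rfl⟩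
    (ρ.sameCycle_toPerm_iff.2 ((hav i).trans (hav j).symm))))

theorem RotationSystem.IsPlanar.markedPlanar_comp_iff {V : Type*} {G : SimpleGraph V}
    {ρ : RotationSystem G} (hρ : ρ.IsPlanar)
    (hunique : ∀ ρ' : RotationSystem G, ρ'.IsPlanar →
      ρ'.toPerm = ρ.toPerm ∨ ρ'.toPerm = ρ.toPerm⁻¹)
    {a b : Fin 3 → G.Dart} {ε δ : Equiv.Perm (Fin 3)}
    (hε : ∀ i j, RestrictMapsTo ρ.toPerm (Set.range a) (a i) (a j) ↔ ε i = j)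
    (hδ : ∀ i j, RestrictMapsTo ρ.toPerm (Set.range b) (b i) (b j) ↔ δ i = j)
    (π : Equiv.Perm (Fin 3)) : MarkedPlanar G a (b ∘ π) ↔ δ * π * ε = π := by
  have hrange : Set.range (b ∘ π) = Set.range b := π.surjective.range_comp b
  have hcomm : δ * π * ε = π ↔ ∀ i, δ (π (ε i)) = π i := Equiv.ext_iff
  rw [hcomm]
  constructor
  · rintro ⟨ρ', hρ', h⟩ i
    rw [hrange] at h
    rcases hunique ρ' hρ' with heq | heq <;>
      simp only [heq, RestrictMapsTo.inv_iff, hε, Function.comp_apply, hδ] at h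
    · exact h _ _ rfl
    · exact h _ _ rfl
  · refine fun h => ⟨ρ, hρ, fun i j hij => ?_⟩
    rw [hrange, Function.comp_apply, Function.comp_apply, hδ, ← (hε i j).1 hij]
    exact h i

theorem card_perm_mul_mul_eq_self : ∀ ε δ : Equiv.Perm (Fin 3), (∀ i, ε i ≠ i) → (∀ i, δ i ≠ i) →
    Fintype.card {π : Equiv.Perm (Fin 3) // δ * π * ε = π} = 3 := by
  decide

/-- for a 3-connected finite simple graph `G` admitting a planar rotation
system, distinct vertices `v ≠ w`, three distinct edges `a 0, a 1, a 2` at `v` and three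
distinct edges `b 0, b 1, b 2` at `w` (as darts), exactly three of the six bijections from
`A` to `B` (given by permutations `π` of `Fin 3`, pairing `a i` with `b (π i)`) make the
resulting marked graph planar. -/
theorem markedPlanar_three_of_six {V : Type*} [Fintype V]
    (G : SimpleGraph V) (h3 : IsKConnected 3 G)
    (hpl : ∃ ρ : RotationSystem G, ρ.IsPlanar)
    (v w : V) (hvw : v ≠ w)
    (a b : Fin 3 → G.Dart) (ha : Function.Injective a) (hb : Function.Injective b)
    (hav : ∀ i, (a i).toProd.1 = v) (hbw : ∀ i, (b i).toProd.1 = w) :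
    Nat.card {π : Equiv.Perm (Fin 3) // MarkedPlanar G a (b ∘ π)} = 3 := by
  obtain ⟨ρ, hρ⟩ := hpl
  obtain ⟨ε, hεi, hε⟩ := ρ.exists_restrict_perm ha hav
  obtain ⟨δ, hδi, hδ⟩ := ρ.exists_restrict_perm hb hbw
  have hiff := hρ.markedPlanar_comp_iff (fun _ hρ' => hρ.toPerm_eq_or_eq_inv h3 hρ') hε hδ
  rw [Nat.card_congr (Equiv.subtypeEquivRight hiff), Nat.card_eq_fintype_card]
  exact card_perm_mul_mul_eq_self ε δ hεi hδi
end
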